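/- arXiv:2511.00233 — 5 statements merged into one kernel-verified Lean document; each statement's English description precedes it below -/
import Mathlib

section
/- Let Ω ⊆ ℝ^n be a bounded open set equipped with Lebesgue measure, and let (u_j) be a sequence of Borel measurable functions u_j : Ω → ℝ that is bounded in L¹, i.e. sup_j ∫_Ω |u_j(x)| dx < ∞. Then there exist a strictly increasing sequence of indices k ↦ j_k and a measurable family ν = (ν_x)_{x∈Ω} of Borel probability measures on ℝ (equivalently, a Markov kernel from Ω to ℝ) such that for every continuous function φ : ℝ → ℝ vanishing at infinity and every integrable function ψ ∈ L¹(Ω; ℝ), one has ∫_Ω ψ(x) φ(u_{j_k}(x)) dx → ∫_Ω ψ(x) (∫_ℝ φ(λ) dν_x(λ)) dx as k → ∞. -/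
/-!
After normalising, Lebesgue measure on `Ω` is a probability measure `p` (if `Ω` is null, there is
nothing to prove). Let `P j` be the law of `x ↦ (x, u j x)` under `p`, a probability measure on
`ℝⁿ × ℝ` carried by the graph of `u j`. The first marginal of each `P j` is `p`, and by Markov's
inequality the `L¹` bound makes the second marginals tight; hence the family `P j` is tight, and
Prokhorov's theorem gives a subsequence converging weakly to some `Q`, whose first marginal is
again `p`. The conditional kernel `ν` of `Q` given the first coordinate is the Young measure:
testing the weak convergence against `(x, t) ↦ g x * φ t` gives the claim for bounded
continuous `g` (`exists_young_measure_of_prob`), and bounded continuous functions are dense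
in `L¹` (`tendsto_integral_mul_of_boundedContinuous`).
-/

open MeasureTheory Filter Topology

open scoped BoundedContinuousFunction

/-- Weak-* convergence of a uniformly bounded sequence in `L^∞` may be tested on bounded continuous
functions only, since these are dense in `L¹`. -/
lemma tendsto_integral_mul_of_boundedContinuous {X : Type*} [MetricSpace X] [MeasurableSpace X]
    [BorelSpace X] (p : Measure X) [IsProbabilityMeasure p] (a : ℕ → X → ℝ) (b : X → ℝ) (M : ℝ)
    (ha : ∀ k, AEStronglyMeasurable (a k) p) (hb : AEStronglyMeasurable b p)
    (haM : ∀ k x, ‖a k x‖ ≤ M) (hbM : ∀ x, ‖b x‖ ≤ M)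
    (h : ∀ g : X →ᵇ ℝ, Tendsto (fun k => ∫ x, g x * a k x ∂p) atTop (𝓝 (∫ x, g x * b x ∂p)))
    (ψ : X → ℝ) (hψ : Integrable ψ p) :
    Tendsto (fun k => ∫ x, ψ x * a k x ∂p) atTop (𝓝 (∫ x, ψ x * b x ∂p)) := by
  have key : ∀ (g : X →ᵇ ℝ) (c : X → ℝ), Integrable g p → AEStronglyMeasurable c p →
      (∀ x, ‖c x‖ ≤ M) →
      |∫ x, ψ x * c x ∂p - ∫ x, g x * c x ∂p| ≤ (∫ x, ‖ψ x - g x‖ ∂p) * M := by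
    intro g c hg hc hcM
    have hcM' : ∀ᵐ x ∂p, ‖c x‖ ≤ M := ae_of_all _ hcM
    rw [← integral_sub (hψ.mul_bdd hc hcM') (hg.mul_bdd hc hcM'), ← integral_mul_const]
    rw [← Real.norm_eq_abs]
    refine norm_integral_le_of_norm_le ((hψ.sub hg).norm.mul_const M) (ae_of_all _ fun x => ?_)
    rw [← sub_mul, norm_mul]
    exact mul_le_mul_of_nonneg_left (hcM x) (norm_nonneg _)
  have hX : Nonempty X := nonempty_of_isProbabilityMeasure p
  have hM : 0 ≤ M := (norm_nonneg _).trans (hbM hX.some)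
  rw [Metric.tendsto_atTop]
  intro ε hε
  obtain ⟨g, hgε, hg⟩ := hψ.exists_boundedContinuous_integral_sub_le
    (ε := ε / (3 * (M + 1))) (by positivity)
  have hsmall : (∫ x, ‖ψ x - g x‖ ∂p) * M < ε / 3 := by
    calc (∫ x, ‖ψ x - g x‖ ∂p) * M ≤ ε / (3 * (M + 1)) * M := by gcongr
      _ < ε / (3 * (M + 1)) * (M + 1) := by gcongr; linarith
      _ = ε / 3 := by field_simp
  obtain ⟨N, hN⟩ := Metric.tendsto_atTop.1 (h g) (ε / 3) (by positivity)
  refine ⟨N, fun k hk => ?_⟩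
  have h1 := (key g (a k) hg (ha k) (haM k)).trans_lt hsmall
  have h2 := (key g b hg hb hbM).trans_lt hsmall
  have h3 := hN k hk
  rw [Real.dist_eq] at h3 ⊢
  rw [abs_lt] at *
  constructor <;> linarith

/-- Markov's inequality: a sequence of real random variables bounded in `L¹` has tight laws. -/
lemma isTightMeasureSet_range_map_of_integral_le {X : Type*} [MeasurableSpace X] (p : Measure X)
    [IsProbabilityMeasure p] (u : ℕ → X → ℝ) (hu : ∀ j, Measurable (u j))
    (hint : ∀ j, Integrable (u j) p) (C : ℝ) (hC : ∀ j, ∫ x, |u j x| ∂p ≤ C) :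
    IsTightMeasureSet (Set.range fun j => p.map (u j)) := by
  apply isTightMeasureSet_of_tendsto_measure_norm_gt
  have hlim : Tendsto (fun r : ℝ => ENNReal.ofReal (C / r)) atTop (𝓝 0) := by
    have := ENNReal.tendsto_ofReal (tendsto_const_nhds (x := C) |>.div_atTop tendsto_id)
    simpa using this
  refine tendsto_of_tendsto_of_tendsto_of_le_of_le' tendsto_const_nhds hlim
    (Eventually.of_forall fun _ => zero_le) ?_
  filter_upwards [eventually_gt_atTop (0 : ℝ)] with r hr
  simp only [Set.mem_range, iSup_exists, iSup_le_iff]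
  rintro _ j rfl
  rw [Measure.map_apply (hu j) (measurableSet_lt measurable_const measurable_norm)]
  have h1 := mul_meas_ge_le_integral_of_nonneg (μ := p) (ae_of_all _ fun x => abs_nonneg (u j x))
    (hint j).abs r
  calc p (u j ⁻¹' {x | r < ‖x‖}) ≤ p {x | r ≤ |u j x|} :=
        measure_mono fun x (hx : r < ‖u j x‖) => hx.le
    _ = ENNReal.ofReal (p.real {x | r ≤ |u j x|}) := by simp
    _ ≤ ENNReal.ofReal (C / r) := by
        apply ENNReal.ofReal_le_ofReal
        rw [le_div_iff₀ hr, mul_comm]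
        exact h1.trans (hC j)

/-- The Young measure theorem over a probability space: the Young measure is the conditional kernel
of a weak limit of the laws of `x ↦ (x, u j x)`. -/
lemma exists_young_measure_of_prob {X : Type*} [MetricSpace X] [CompleteSpace X]
    [SecondCountableTopology X] [MeasurableSpace X] [BorelSpace X] (p : Measure X)
    [IsProbabilityMeasure p] (u : ℕ → X → ℝ) (hu : ∀ j, Measurable (u j))
    (hint : ∀ j, Integrable (u j) p) (C : ℝ) (hC : ∀ j, ∫ x, |u j x| ∂p ≤ C) :
    ∃ jk : ℕ → ℕ, StrictMono jk ∧ ∃ ν : ProbabilityTheory.Kernel X ℝ,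
      ProbabilityTheory.IsMarkovKernel ν ∧
      ∀ φ : ZeroAtInftyContinuousMap ℝ ℝ, ∀ ψ : X → ℝ, Integrable ψ p →
        Tendsto (fun k => ∫ x, ψ x * φ (u (jk k) x) ∂p) atTop
          (𝓝 (∫ x, ψ x * ∫ t, φ t ∂(ν x) ∂p)) := by
  have hmk : ∀ j, Measurable fun x => (x, u j x) := fun j => measurable_id.prodMk (hu j)
  let P : ℕ → ProbabilityMeasure (X × ℝ) := fun j =>
    ⟨p.map fun x => (x, u j x), Measure.isProbabilityMeasure_map (hmk j).aemeasurable⟩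
  have hfst : ∀ j, (P j : Measure (X × ℝ)).fst = p := fun j => by
    change (p.map fun x => (x, u j x)).fst = p
    rw [Measure.fst_map_prodMk (hu j)]
    exact Measure.map_id
  have hsnd : ∀ j, (P j : Measure (X × ℝ)).snd = p.map (u j) := fun j => by
    change (p.map fun x => (x, u j x)).snd = _
    exact Measure.snd_map_prodMk measurable_id
  have htight : IsTightMeasureSet
      {((μ : ProbabilityMeasure (X × ℝ)) : Measure (X × ℝ)) | μ ∈ Set.range P} := by
    apply IsTightMeasureSet.prodMk
    · refine (isTightMeasureSet_singleton (μ := p)).subset ?_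
      rintro _ ⟨_, ⟨_, ⟨j, rfl⟩, rfl⟩, rfl⟩
      exact hfst j
    · refine (isTightMeasureSet_range_map_of_integral_le p u hu hint C hC).subset ?_
      rintro _ ⟨_, ⟨_, ⟨j, rfl⟩, rfl⟩, rfl⟩
      exact ⟨j, (hsnd j).symm⟩
  obtain ⟨Q, -, jk, hjk, hQ⟩ := (isCompact_closure_of_isTightMeasureSet htight).tendsto_subseq
    (fun j => subset_closure (Set.mem_range_self j))
  have hQfst : (Q : Measure (X × ℝ)).fst = p := by
    have h1 := ProbabilityMeasure.tendsto_map_of_tendsto_of_continuous _ _ hQ continuous_fst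
    have h2 : ∀ k, ((P ∘ jk) k).map (f := Prod.fst) continuous_fst.measurable.aemeasurable
        = (⟨p, inferInstance⟩ : ProbabilityMeasure X) :=
      fun k => Subtype.ext (hfst (jk k))
    simp only [h2] at h1
    have h3 := tendsto_nhds_unique h1 tendsto_const_nhds
    exact congrArg Subtype.val h3
  refine ⟨jk, hjk, (Q : Measure (X × ℝ)).condKernel, inferInstance, fun φ => ?_⟩
  have hφM : ∀ t, ‖φ t‖ ≤ ‖φ.toBCF‖ := fun t => φ.toBCF.norm_coe_le_norm t
  have hφm : Measurable φ := φ.continuous.measurable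
  refine tendsto_integral_mul_of_boundedContinuous p _ _ ‖φ.toBCF‖
    (fun k => (hφm.comp (hu _)).aestronglyMeasurable) ?_ (fun k x => hφM _) (fun x => ?_)
    (fun g => ?_)
  · exact (StronglyMeasurable.integral_kernel_prod_right'
      (f := fun z : X × ℝ => φ z.2) (hφm.comp measurable_snd).stronglyMeasurable).aestronglyMeasurable
  · simpa using norm_integral_le_of_norm_le_const
      (μ := (Q : Measure (X × ℝ)).condKernel x) (ae_of_all _ hφM)
  · let F : (X × ℝ) →ᵇ ℝ := g.compContinuous ⟨Prod.fst, continuous_fst⟩ *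
      φ.toBCF.compContinuous ⟨Prod.snd, continuous_snd⟩
    have hF : ∀ z, F z = g z.1 * φ z.2 := fun _ => rfl
    have h1 := ProbabilityMeasure.tendsto_iff_forall_integral_tendsto.1 hQ F
    have h2 : ∀ k, ∫ z, F z ∂((P ∘ jk) k : Measure (X × ℝ)) = ∫ x, g x * φ (u (jk k) x) ∂p :=
      fun k => integral_map (hmk (jk k)).aemeasurable F.continuous.aestronglyMeasurable
    have h3 : ∫ z, F z ∂(Q : Measure (X × ℝ)) =
        ∫ x, g x * ∫ t, φ t ∂((Q : Measure (X × ℝ)).condKernel x) ∂p := by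
      rw [← Measure.integral_condKernel (F.integrable _), hQfst]
      simp only [hF, integral_const_mul]
    simpa only [h2, h3] using h1

/-- **Young-measure compactness theorem.**
If `(u j)` is a sequence of measurable functions, bounded in `L¹` on a bounded open set
`Ω ⊆ ℝⁿ`, then there is a subsequence `u (jk k)` and a Markov kernel `ν` (a measurable
family of probability measures `ν x` on `ℝ`) such that for every `φ ∈ C₀(ℝ)` and every
`ψ ∈ L¹(Ω)` one has `∫_Ω ψ(x) φ(u_{jk}(x)) dx → ∫_Ω ψ(x) ⟨ν_x, φ⟩ dx`. -/
theorem stmt_0 {n : ℕ} (Ω : Set (EuclideanSpace ℝ (Fin n)))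
    (hΩopen : IsOpen Ω) (hΩbdd : Bornology.IsBounded Ω)
    (u : ℕ → EuclideanSpace ℝ (Fin n) → ℝ)
    (hmeas : ∀ j, Measurable (u j))
    (hint : ∀ j, IntegrableOn (u j) Ω volume)
    (hbdd : ∃ C : ℝ, ∀ j, (∫ x in Ω, |u j x|) ≤ C) :
    ∃ jk : ℕ → ℕ, StrictMono jk ∧
      ∃ ν : ProbabilityTheory.Kernel (EuclideanSpace ℝ (Fin n)) ℝ,
        ProbabilityTheory.IsMarkovKernel ν ∧
        ∀ φ : ZeroAtInftyContinuousMap ℝ ℝ, ∀ ψ : EuclideanSpace ℝ (Fin n) → ℝ,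
          IntegrableOn ψ Ω volume →
          Tendsto (fun k => ∫ x in Ω, ψ x * φ (u (jk k) x)) atTop
            (𝓝 (∫ x in Ω, ψ x * ∫ lam, φ lam ∂(ν x))) := by
  rcases eq_or_ne (volume Ω) 0 with h0 | h0
  · refine ⟨id, strictMono_id, ProbabilityTheory.Kernel.const _ (Measure.dirac 0), inferInstance,
      fun φ ψ _ => ?_⟩
    simp [Measure.restrict_eq_zero.2 h0]
  have htop : volume Ω ≠ ⊤ := hΩbdd.measure_lt_top.ne
  obtain ⟨C, hC⟩ := hbdd
  have hp : IsProbabilityMeasure ((volume Ω)⁻¹ • volume.restrict Ω) :=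
    ⟨by simp [ENNReal.inv_mul_cancel h0 htop]⟩
  have hc : ((volume Ω)⁻¹).toReal ≠ 0 := by simp [ENNReal.toReal_eq_zero_iff, h0, htop]
  obtain ⟨jk, hjk, ν, hν, H⟩ := exists_young_measure_of_prob ((volume Ω)⁻¹ • volume.restrict Ω)
    u hmeas (fun j => (hint j).smul_measure (ENNReal.inv_ne_top.2 h0))
    (((volume Ω)⁻¹).toReal * C) (fun j => by
      rw [integral_smul_measure, smul_eq_mul]
      exact mul_le_mul_of_nonneg_left (hC j) ENNReal.toReal_nonneg)
  refine ⟨jk, hjk, ν, hν, fun φ ψ hψ => ?_⟩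
  have h1 := (H φ ψ (hψ.smul_measure (ENNReal.inv_ne_top.2 h0))).const_mul
    (((volume Ω)⁻¹).toReal)⁻¹
  simpa only [integral_smul_measure, smul_eq_mul, inv_mul_cancel_left₀ hc] using h1
end

section
/- Let Ω ⊆ ℝ^n be a bounded open set with Lebesgue measure, (u_{j_k}) a sequence of measurable functions Ω → ℝ, and ν = (ν_x)_{x∈Ω} a measurable family of Borel probability measures on ℝ such that for every continuous φ : ℝ → ℝ vanishing at infinity and every ψ ∈ L¹(Ω), ∫_Ω ψ(x) φ(u_{j_k}(x)) dx → ∫_Ω ψ(x) ⟨ν_x, φ⟩ dx. If in addition u_{j_k} converges weakly in L¹(Ω) to a function u (i.e. ∫_Ω u_{j_k} g dx → ∫_Ω u g dx for every g ∈ L^∞(Ω)), then for almost every x ∈ Ω the barycenter ν̄_x := ∫_ℝ λ dν_x(λ) is finite and satisfies ν̄_x = u(x). -/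
/-!
The two ingredients are uniform integrability of the sequence and truncation.

A weakly convergent sequence in `L¹` of a finite measure has equi-absolutely continuous integrals
(Vitali-Hahn-Saks, `equi_integrable_of_weak_convergence`). This follows from Baire's theorem on the
set of functions with values in `[-1, 1]`, a complete metric space for the `L¹` distance on which
`g ↦ ∫ v k * g` is continuous: given `ε`, there is a ball on which the functionals with `k ≥ m` are
all `ε`-close to the one with `k = m`, and modifying the centre of the ball on a set `A` of small
measure stays inside it.

Each `ν x` has mass one, so testing against cutoffs shows that `|v k| > N` has small measure for
large `N`, eventually in `k` (`tight_of_generates`). Together these bound `∫_{|v k| > N} |v k|`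
(`tail_small`).

Let `T_N t = t * cutoff N t ∈ C₀(ℝ)` and `b_N x = ∫ T_N dν_x`. The tail bound gives a bound,
independent of `N`, for `∫∫ |T_N| dν_x dx`, so by Fatou the identity is `ν_x`-integrable for
a.e. `x`, and `b_N` converges a.e. to the barycenter. It also gives
`|∫ g * (b_N - u)| ≤ ε` for all `|g| ≤ 1` and large `N`; the choice `g = sign (b_N - u)` shows
`b_N → u` in `L¹`. Uniqueness of limits in measure finishes the proof.
-/

open MeasureTheory Filter Topology

section Aux

open scoped ProbabilityTheory

variable {X : Type*} [MeasurableSpace X] {μ : Measure X}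

lemma integrable_mul_of_bdd {f g : X → ℝ} (hf : Integrable f μ) (hg : AEStronglyMeasurable g μ)
    {C : ℝ} (hC : ∀ᵐ x ∂μ, |g x| ≤ C) : Integrable (fun x => f x * g x) μ :=
  hf.mul_bdd hg hC

lemma abs_integral_le_of_abs_le {f g : X → ℝ} (hg : Integrable g μ)
    (h : ∀ x, |f x| ≤ g x) : |∫ x, f x ∂μ| ≤ ∫ x, g x ∂μ :=
  norm_integral_le_of_norm_le (f := f) hg (Eventually.of_forall h)

/-- An integrable function defines a functional that is continuous for the `L¹` distance on the
functions bounded by `1`, although it need not be bounded on `L¹`. -/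
lemma continuous_integral_mul_unitBall {w : X → ℝ} (hw : Integrable w μ)
    (K : Set (Lp ℝ 1 μ)) (hK : ∀ g ∈ K, ∀ᵐ x ∂μ, |g x| ≤ 1) :
    Continuous fun g : K => ∫ x, w x * (g : Lp ℝ 1 μ) x ∂μ := by
  rw [continuous_iff_seqContinuous]
  intro s g hs
  refine tendsto_of_subseq_tendsto fun ns hns => ?_
  have h1 : Tendsto (fun i => ((s (ns i) : K) : Lp ℝ 1 μ)) atTop (𝓝 (g : Lp ℝ 1 μ)) :=
    (continuous_subtype_val.tendsto g).comp (hs.comp hns)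
  obtain ⟨ms, -, hms⟩ := (tendstoInMeasure_of_tendsto_Lp h1).exists_seq_tendsto_ae
  refine ⟨ms, ?_⟩
  refine tendsto_integral_of_dominated_convergence (fun x => |w x|) (fun i => ?_) hw.abs
    (fun i => ?_) ?_
  · exact hw.1.mul (Lp.aestronglyMeasurable _)
  · filter_upwards [hK _ (s (ns (ms i))).2] with x hx
    rw [norm_mul, Real.norm_eq_abs, Real.norm_eq_abs]
    exact mul_le_of_le_one_right (abs_nonneg _) hx
  · filter_upwards [hms] with x hx
    exact hx.const_mul _

/-- The Baire category step: on some `L¹` ball of functions with values in `[-1, 1]`, the functionals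
`g ↦ ∫ v k * g`, `k ≥ m`, are within `ε` of the one with `k = m`. -/
lemma exists_ball_of_weak_convergence [IsFiniteMeasure μ] {v : ℕ → X → ℝ} {u : X → ℝ}
    (hv : ∀ k, Integrable (v k) μ)
    (hweak : ∀ g : X → ℝ, Measurable g → (∃ C : ℝ, ∀ x, |g x| ≤ C) →
      Tendsto (fun k => ∫ x, v k x * g x ∂μ) atTop (𝓝 (∫ x, u x * g x ∂μ)))
    {ε : ℝ} (hε : 0 < ε) :
    ∃ (m : ℕ) (g₀ : X → ℝ) (r : ℝ), Measurable g₀ ∧ (∀ x, |g₀ x| ≤ 1) ∧ 0 < r ∧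
      ∀ g : X → ℝ, Measurable g → (∀ x, |g x| ≤ 1) → ∫ x, |g x - g₀ x| ∂μ < r →
        ∀ k ≥ m, |∫ x, v k x * g x ∂μ - ∫ x, v m x * g x ∂μ| ≤ ε := by
  -- `K` is the order interval of functions with values in `[-1, 1]` a.e., closed in `L¹`
  have hone : MemLp (fun _ : X => (1 : ℝ)) 1 μ := memLp_const 1
  let e : Lp ℝ 1 μ := hone.toLp
  have he : e =ᵐ[μ] fun _ => (1 : ℝ) := hone.coeFn_toLp
  let K : Set (Lp ℝ 1 μ) := Set.Icc (-e) e
  have hKmem : ∀ g : Lp ℝ 1 μ, g ∈ K ↔ ∀ᵐ x ∂μ, |g x| ≤ 1 := by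
    intro g
    rw [Set.mem_Icc, ← Lp.coeFn_le, ← Lp.coeFn_le]
    constructor
    · rintro ⟨h1, h2⟩
      filter_upwards [h1, h2, he, Lp.coeFn_neg e] with x a b c d
      rw [d, Pi.neg_apply, c] at a
      rw [c] at b
      exact abs_le.2 ⟨a, b⟩
    · intro h
      constructor
      · filter_upwards [h, he, Lp.coeFn_neg e] with x a c d
        rw [d, Pi.neg_apply, c]
        exact (abs_le.1 a).1
      · filter_upwards [h, he] with x a c
        rw [c]
        exact (abs_le.1 a).2
  -- `hweak` needs an everywhere bounded test function, hence the clamped representative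
  have hrep : ∀ g : Lp ℝ 1 μ, g ∈ K → ∃ g' : X → ℝ, Measurable g' ∧ (∀ x, |g' x| ≤ 1) ∧
      g =ᵐ[μ] g' := by
    intro g hg
    refine ⟨fun x => max (-1) (min 1 (g x)),
      measurable_const.max (measurable_const.min (Lp.stronglyMeasurable g).measurable),
      fun x => abs_le.2 ⟨le_max_left _ _, max_le (by norm_num) (min_le_left _ _)⟩, ?_⟩
    filter_upwards [(hKmem g).1 hg] with x hx
    rw [min_eq_right (abs_le.1 hx).2, max_eq_right (abs_le.1 hx).1]
  have : CompleteSpace K := (isClosed_Icc : IsClosed K).completeSpace_coe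
  have hK0 : (0 : Lp ℝ 1 μ) ∈ K := by
    rw [hKmem]
    filter_upwards [Lp.coeFn_zero ℝ 1 μ] with x hx
    rw [hx]; simp
  have : Nonempty K := ⟨⟨0, hK0⟩⟩
  let F : ℕ → K → ℝ := fun k g => ∫ x, v k x * (g : Lp ℝ 1 μ) x ∂μ
  have hF : ∀ k, Continuous (F k) := fun k =>
    continuous_integral_mul_unitBall (hv k) K fun g hg => (hKmem g).1 hg
  have hFcauchy : ∀ g : K, CauchySeq fun k => F k g := by
    intro g
    obtain ⟨g', hg'm, hg'b, hg'⟩ := hrep g g.2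
    have h := (hweak g' hg'm ⟨1, hg'b⟩).cauchySeq
    have hFg : (fun k => F k g) = fun k => ∫ x, v k x * g' x ∂μ := funext fun k =>
      integral_congr_ae (by filter_upwards [hg'] with x hx; rw [hx])
    rwa [hFg]
  obtain ⟨m, ⟨g₀, hg₀⟩⟩ := nonempty_interior_of_iUnion_of_closed
    (f := fun m : ℕ => {g : K | ∀ k ≥ m, |F k g - F m g| ≤ ε})
    (fun m => by
      simp only [Set.ofPred_forall]
      exact isClosed_iInter fun k => isClosed_iInter fun _ =>
        isClosed_le ((hF k).sub (hF m)).abs continuous_const)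
    (by
      refine Set.eq_univ_of_forall fun g => Set.mem_iUnion.2 ?_
      obtain ⟨N, hN⟩ := Metric.cauchySeq_iff'.1 (hFcauchy g) ε hε
      exact ⟨N, fun k hk => (Real.dist_eq _ _ ▸ hN k hk).le⟩)
  obtain ⟨r, hr, hball⟩ := Metric.mem_nhds_iff.1 (mem_interior_iff_mem_nhds.1 hg₀)
  obtain ⟨g', hg'm, hg'b, hg'⟩ := hrep g₀ g₀.2
  refine ⟨m, g', r, hg'm, hg'b, hr, fun g hgm hgb hgr k hk => ?_⟩
  have hgL : MemLp g 1 μ := MemLp.of_bound hgm.aestronglyMeasurable 1 (Eventually.of_forall hgb)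
  have hgK : hgL.toLp ∈ K := by
    rw [hKmem]
    filter_upwards [hgL.coeFn_toLp] with x hx
    rw [hx]; exact hgb x
  have hdist : dist (⟨hgL.toLp, hgK⟩ : K) g₀ < r := by
    rw [Subtype.dist_eq, L1.dist_eq_integral_dist]
    refine lt_of_eq_of_lt (integral_congr_ae ?_) hgr
    filter_upwards [hgL.coeFn_toLp, hg'] with x hx hx'
    rw [hx, hx', Real.dist_eq]
  have hmem := hball (Metric.mem_ball.2 hdist) k hk
  have hFg : ∀ j, F j ⟨hgL.toLp, hgK⟩ = ∫ x, v j x * g x ∂μ := fun j =>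
    integral_congr_ae (by filter_upwards [hgL.coeFn_toLp] with x hx; rw [hx])
  rwa [hFg, hFg] at hmem

/-- **Vitali-Hahn-Saks**: a weakly convergent sequence in `L¹` of a finite measure has uniformly
absolutely continuous integrals. The bound is stated only for large `k`. -/
lemma equi_integrable_of_weak_convergence [IsFiniteMeasure μ] {v : ℕ → X → ℝ} {u : X → ℝ}
    (hmeas : ∀ k, Measurable (v k)) (hv : ∀ k, Integrable (v k) μ)
    (hweak : ∀ g : X → ℝ, Measurable g → (∃ C : ℝ, ∀ x, |g x| ≤ C) →
      Tendsto (fun k => ∫ x, v k x * g x ∂μ) atTop (𝓝 (∫ x, u x * g x ∂μ)))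
    {ε : ℝ} (hε : 0 < ε) :
    ∃ (m : ℕ) (δ : ℝ), 0 < δ ∧ ∀ k ≥ m, ∀ A : Set X, MeasurableSet A → μ.real A ≤ δ →
      ∫ x in A, |v k x| ∂μ ≤ ε := by
  obtain ⟨m, g₀, r, hg₀m, hg₀b, hr, H⟩ := exists_ball_of_weak_convergence hv hweak
    (show (0 : ℝ) < ε / 4 by positivity)
  obtain ⟨δ₁, hδ₁, hδ₁'⟩ := (memLp_one_iff_integrable.2 (hv m)).eLpNorm_indicator_le le_rfl
    ENNReal.one_ne_top (show (0 : ℝ) < ε / 4 by positivity)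
  refine ⟨m, min δ₁ (r / 4), lt_min hδ₁ (by positivity), fun k hk A hA hAδ => ?_⟩
  have hvm : ∫ x in A, |v m x| ∂μ ≤ ε / 4 := by
    have h := hδ₁' A hA (by
      rw [← ENNReal.ofReal_toReal (measure_ne_top μ A)]
      exact ENNReal.ofReal_le_ofReal (hAδ.trans (min_le_left _ _)))
    rw [eLpNorm_indicator_eq_eLpNorm_restrict hA, eLpNorm_one_eq_lintegral_enorm] at h
    have h2 : ∫ x in A, ‖v m x‖ ∂μ ≤ ε / 4 := by
      rw [integral_norm_eq_lintegral_enorm (hv m).1.restrict]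
      exact ENNReal.toReal_le_of_le_ofReal (by positivity) h
    exact h2
  -- Compare two elements of the ball that equal `g₀` off `A`; on `A`, one is `s`, the other `0`.
  -- The difference of the two estimates isolates `∫ x in A, |v k x|`.
  let s : X → ℝ := fun x => if 0 ≤ v k x then 1 else -1
  have hsm : Measurable s :=
    Measurable.ite (measurableSet_le measurable_const (hmeas k)) measurable_const measurable_const
  have hsb : ∀ x, |s x| ≤ 1 := fun x => by dsimp only [s]; split_ifs <;> simp
  have hsv : ∀ x, v k x * s x = |v k x| := fun x => by
    dsimp only [s]
    split_ifs with h
    · rw [abs_of_nonneg h, mul_one]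
    · rw [abs_of_neg (not_le.1 h)]; ring
  have key : ∀ t : X → ℝ, Measurable t → (∀ x, |t x| ≤ 1) →
      |(∫ x, v k x * (A.indicator t x + Aᶜ.indicator g₀ x) ∂μ)
        - ∫ x, v m x * (A.indicator t x + Aᶜ.indicator g₀ x) ∂μ| ≤ ε / 4 := by
    intro t htm htb
    refine H _ ((htm.indicator hA).add (hg₀m.indicator hA.compl)) (fun x => ?_) ?_ k hk
    · by_cases hx : x ∈ A <;> simp [hx, htb, hg₀b]
    · have h1 : ∫ x, |A.indicator t x + Aᶜ.indicator g₀ x - g₀ x| ∂μ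
          ≤ ∫ x, A.indicator (fun _ => (2 : ℝ)) x ∂μ := by
        refine integral_mono_of_nonneg (Eventually.of_forall fun x => abs_nonneg _)
          ((integrable_const _).indicator hA) (Eventually.of_forall fun x => ?_)
        by_cases hx : x ∈ A
        · simp only [hx, Set.indicator_of_mem, Set.mem_compl_iff, not_true, not_false_eq_true,
            Set.indicator_of_notMem, add_zero]
          have := abs_sub (t x) (g₀ x)
          linarith [htb x, hg₀b x]
        · simp [hx]
      rw [integral_indicator_const _ hA, smul_eq_mul] at h1
      have := hAδ.trans (min_le_right _ _)
      refine lt_of_le_of_lt h1 ?_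
      linarith
  have hsplit : ∀ (j : ℕ) (t : X → ℝ), Measurable t → (∀ x, |t x| ≤ 1) →
      ∫ x, v j x * (A.indicator t x + Aᶜ.indicator g₀ x) ∂μ
        = (∫ x in A, v j x * t x ∂μ) + ∫ x, v j x * Aᶜ.indicator g₀ x ∂μ := by
    intro j t htm htb
    rw [← integral_indicator hA, ← integral_add]
    · refine integral_congr_ae (Eventually.of_forall fun x => ?_)
      by_cases hx : x ∈ A <;> simp [hx]
    · exact (integrable_mul_of_bdd (hv j) htm.aestronglyMeasurable
        (Eventually.of_forall htb)).indicator hA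
    · refine integrable_mul_of_bdd (C := 1) (hv j)
        (hg₀m.indicator hA.compl).aestronglyMeasurable (Eventually.of_forall fun x => ?_)
      by_cases hx : x ∈ A <;> simp [hx, hg₀b]
  have k1 := key s hsm hsb
  have k0 := key (fun _ => 0) measurable_const (by simp)
  rw [hsplit _ _ hsm hsb, hsplit _ _ hsm hsb] at k1
  rw [hsplit _ _ measurable_const (by simp), hsplit _ _ measurable_const (by simp)] at k0
  simp only [hsv, mul_zero, integral_zero, zero_add] at k1 k0
  have k2 : |∫ x in A, v m x * s x ∂μ| ≤ ε / 4 :=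
    (abs_integral_le_of_abs_le (hv m).abs.integrableOn fun x => by
      rw [abs_mul]; exact mul_le_of_le_one_right (abs_nonneg _) (hsb x)).trans hvm
  rw [abs_le] at k0 k1 k2
  linarith [k0.1, k1.2, k2.2]

/-- The continuous cutoff equal to `1` on `[-N, N]`, to `0` outside `(-N-1, N+1)`, and affine in
between. -/
noncomputable def cutoff (N : ℕ) (t : ℝ) : ℝ := max 0 (min 1 (N + 1 - |t|))

lemma cutoff_nonneg (N : ℕ) (t : ℝ) : 0 ≤ cutoff N t := le_max_left _ _

lemma cutoff_le_one (N : ℕ) (t : ℝ) : cutoff N t ≤ 1 := max_le zero_le_one (min_le_left _ _)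

lemma abs_cutoff_le_one (N : ℕ) (t : ℝ) : |cutoff N t| ≤ 1 := by
  rw [abs_of_nonneg (cutoff_nonneg N t)]; exact cutoff_le_one N t

lemma cutoff_eq_one {N : ℕ} {t : ℝ} (h : |t| ≤ N) : cutoff N t = 1 := by
  rw [cutoff, min_eq_left (by linarith), max_eq_right zero_le_one]

lemma cutoff_eq_zero {N : ℕ} {t : ℝ} (h : (N : ℝ) + 1 ≤ |t|) : cutoff N t = 0 :=
  max_eq_left ((min_le_right _ _).trans (by linarith))

lemma continuous_cutoff (N : ℕ) : Continuous (cutoff N) := by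
  unfold cutoff; fun_prop

lemma eventually_cutoff_eq_one (t : ℝ) : ∀ᶠ N : ℕ in atTop, cutoff N t = 1 := by
  obtain ⟨M, hM⟩ := exists_nat_ge |t|
  filter_upwards [eventually_ge_atTop M] with N hN
  exact cutoff_eq_one (hM.trans (by exact_mod_cast hN))

/-- The product of a continuous function with `cutoff N`, as an element of `C₀(ℝ)`. -/
noncomputable def truncC0 (N : ℕ) (f : C(ℝ, ℝ)) : ZeroAtInftyContinuousMap ℝ ℝ where
  toFun t := f t * cutoff N t
  continuous_toFun := f.continuous.mul (continuous_cutoff N)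
  zero_at_infty' := by
    refine HasCompactSupport.is_zero_at_infty ?_
    refine HasCompactSupport.intro (isCompact_Icc (a := -((N : ℝ) + 1)) (b := N + 1)) ?_
    intro t ht
    rw [Set.mem_Icc, ← abs_le, not_le] at ht
    rw [cutoff_eq_zero ht.le, mul_zero]

lemma truncC0_apply (N : ℕ) (f : C(ℝ, ℝ)) (t : ℝ) : truncC0 N f t = f t * cutoff N t := rfl

lemma exists_bound_C0 (φ : ZeroAtInftyContinuousMap ℝ ℝ) : ∃ C, ∀ t, |φ t| ≤ C :=
  ⟨‖φ.toBCF‖, fun t => φ.toBCF.norm_coe_le_norm t⟩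

lemma integrable_C0_comp [IsFiniteMeasure μ] (φ : ZeroAtInftyContinuousMap ℝ ℝ) {w : X → ℝ}
    (hw : Measurable w) : Integrable (fun x => φ (w x)) μ := by
  obtain ⟨C, hC⟩ := exists_bound_C0 φ
  exact Integrable.of_bound (φ.continuous.measurable.comp hw).aestronglyMeasurable C
    (Eventually.of_forall fun x => hC _)

lemma stronglyMeasurable_integral_C0 (ν : ProbabilityTheory.Kernel X ℝ)
    (φ : ZeroAtInftyContinuousMap ℝ ℝ) : StronglyMeasurable fun x => ∫ t, φ t ∂(ν x) :=
  φ.continuous.stronglyMeasurable.integral_kernel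

lemma integrable_integral_C0 [IsFiniteMeasure μ] (ν : ProbabilityTheory.Kernel X ℝ)
    [ProbabilityTheory.IsMarkovKernel ν] (φ : ZeroAtInftyContinuousMap ℝ ℝ) :
    Integrable (fun x => ∫ t, φ t ∂(ν x)) μ := by
  obtain ⟨C, hC⟩ := exists_bound_C0 φ
  refine Integrable.of_bound (stronglyMeasurable_integral_C0 ν φ).aestronglyMeasurable C
    (Eventually.of_forall fun x => ?_)
  simpa using norm_integral_le_of_norm_le_const (μ := ν x) (f := φ)
    (Eventually.of_forall fun t => hC t)

/-- The sequence is tight because each `ν x` has mass one: a sequence losing mass at infinity would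
generate sub-probability measures. -/
lemma tight_of_generates [IsFiniteMeasure μ] {v : ℕ → X → ℝ} (hmeas : ∀ k, Measurable (v k))
    (ν : ProbabilityTheory.Kernel X ℝ) [ProbabilityTheory.IsMarkovKernel ν]
    (hgen : ∀ φ : ZeroAtInftyContinuousMap ℝ ℝ, ∀ ψ : X → ℝ, Integrable ψ μ →
      Tendsto (fun k => ∫ x, ψ x * φ (v k x) ∂μ) atTop
        (𝓝 (∫ x, ψ x * ∫ t, φ t ∂(ν x) ∂μ)))
    {δ : ℝ} (hδ : 0 < δ) :
    ∃ N : ℕ, ∀ᶠ k in atTop, μ.real {x | (N : ℝ) < |v k x|} ≤ δ := by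
  have hlim : Tendsto (fun N => ∫ x, ∫ t, truncC0 N 1 t ∂(ν x) ∂μ) atTop (𝓝 (μ.real Set.univ)) := by
    have h1 : ∀ x, Tendsto (fun N => ∫ t, truncC0 N 1 t ∂(ν x)) atTop (𝓝 1) := by
      intro x
      have h := tendsto_integral_of_dominated_convergence (μ := ν x)
        (F := fun N t => truncC0 N 1 t) (f := fun _ => (1 : ℝ)) (fun _ => (1 : ℝ))
        (fun N => (truncC0 N 1).continuous.aestronglyMeasurable) (integrable_const _)
        (fun N => Eventually.of_forall fun t => by
          simpa [truncC0_apply] using abs_cutoff_le_one N t)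
        (Eventually.of_forall fun t => tendsto_const_nhds.congr' (by
          filter_upwards [eventually_cutoff_eq_one t] with N hN
          simp [truncC0_apply, hN]))
      simpa using h
    have h := tendsto_integral_of_dominated_convergence (μ := μ)
      (F := fun N x => ∫ t, truncC0 N 1 t ∂(ν x)) (f := fun _ => (1 : ℝ)) (fun _ => (1 : ℝ))
      (fun N => (stronglyMeasurable_integral_C0 ν _).aestronglyMeasurable) (integrable_const _)
      (fun N => Eventually.of_forall fun x => by
        simpa using norm_integral_le_of_norm_le_const (μ := ν x) (f := truncC0 N 1) (C := 1)
          (Eventually.of_forall fun t => by simpa [truncC0_apply] using abs_cutoff_le_one N t))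
      (Eventually.of_forall h1)
    simpa using h
  obtain ⟨N, hN⟩ := (hlim.eventually (lt_mem_nhds (sub_lt_self _ hδ))).exists
  refine ⟨N + 1, ?_⟩
  have hk := hgen (truncC0 N 1) (fun _ => 1) (integrable_const _)
  simp only [one_mul] at hk
  filter_upwards [hk.eventually (lt_mem_nhds hN)] with k hk
  have hA : MeasurableSet {x | ((N + 1 : ℕ) : ℝ) < |v k x|} :=
    measurableSet_lt measurable_const (hmeas k).abs
  have hle : ∫ x, truncC0 N 1 (v k x) ∂μ
      ≤ ∫ x, {x | ((N + 1 : ℕ) : ℝ) < |v k x|}ᶜ.indicator (fun _ => (1 : ℝ)) x ∂μ := by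
    refine integral_mono (integrable_C0_comp _ (hmeas k))
      ((integrable_const _).indicator hA.compl) fun x => ?_
    by_cases hx : ((N + 1 : ℕ) : ℝ) < |v k x|
    · have h0 : cutoff N (v k x) = 0 := cutoff_eq_zero (by push_cast at hx; exact hx.le)
      simp [truncC0_apply, h0, Set.indicator_nonneg]
    · rw [Set.indicator_of_mem (by exact hx)]
      simpa [truncC0_apply] using cutoff_le_one N (v k x)
  rw [integral_indicator_const _ hA.compl, smul_eq_mul, mul_one, measureReal_compl hA] at hle
  linarith

/-- Uniform integrability of the tails of a weakly convergent sequence that generates `ν`. -/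
lemma tail_small [IsFiniteMeasure μ] {v : ℕ → X → ℝ} {u : X → ℝ}
    (hmeas : ∀ k, Measurable (v k)) (hv : ∀ k, Integrable (v k) μ)
    (hweak : ∀ g : X → ℝ, Measurable g → (∃ C : ℝ, ∀ x, |g x| ≤ C) →
      Tendsto (fun k => ∫ x, v k x * g x ∂μ) atTop (𝓝 (∫ x, u x * g x ∂μ)))
    (ν : ProbabilityTheory.Kernel X ℝ) [ProbabilityTheory.IsMarkovKernel ν]
    (hgen : ∀ φ : ZeroAtInftyContinuousMap ℝ ℝ, ∀ ψ : X → ℝ, Integrable ψ μ →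
      Tendsto (fun k => ∫ x, ψ x * φ (v k x) ∂μ) atTop
        (𝓝 (∫ x, ψ x * ∫ t, φ t ∂(ν x) ∂μ)))
    {ε : ℝ} (hε : 0 < ε) :
    ∃ N₀ : ℕ, ∀ N ≥ N₀, ∀ᶠ k in atTop, ∫ x in {x | (N : ℝ) < |v k x|}, |v k x| ∂μ ≤ ε := by
  obtain ⟨m, δ, hδ, H⟩ := equi_integrable_of_weak_convergence hmeas hv hweak hε
  obtain ⟨N₀, hN₀⟩ := tight_of_generates hmeas ν hgen hδ
  refine ⟨N₀, fun N hN => ?_⟩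
  filter_upwards [hN₀, eventually_ge_atTop m] with k hk hkm
  refine H k hkm _ (measurableSet_lt measurable_const (hmeas k).abs)
    (le_trans (measureReal_mono fun x hx => ?_) hk)
  have hN' : (N₀ : ℝ) ≤ N := by exact_mod_cast hN
  exact hN'.trans_lt hx

/-- The barycenter identification on an arbitrary finite measure space. -/
theorem barycenter_eq_weak_limit [IsFiniteMeasure μ] {v : ℕ → X → ℝ} {u : X → ℝ}
    (hmeas : ∀ k, Measurable (v k)) (hv : ∀ k, Integrable (v k) μ) (hu : Integrable u μ)
    (hweak : ∀ g : X → ℝ, Measurable g → (∃ C : ℝ, ∀ x, |g x| ≤ C) →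
      Tendsto (fun k => ∫ x, v k x * g x ∂μ) atTop (𝓝 (∫ x, u x * g x ∂μ)))
    (ν : ProbabilityTheory.Kernel X ℝ) [ProbabilityTheory.IsMarkovKernel ν]
    (hgen : ∀ φ : ZeroAtInftyContinuousMap ℝ ℝ, ∀ ψ : X → ℝ, Integrable ψ μ →
      Tendsto (fun k => ∫ x, ψ x * φ (v k x) ∂μ) atTop
        (𝓝 (∫ x, ψ x * ∫ t, φ t ∂(ν x) ∂μ))) :
    ∀ᵐ x ∂μ, Integrable (fun t : ℝ => t) (ν x) ∧ (∫ t, t ∂(ν x)) = u x := by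
  have hAmeas : ∀ (N k : ℕ), MeasurableSet {x | (N : ℝ) < |v k x|} := fun N k =>
    measurableSet_lt measurable_const (hmeas k).abs
  let I : C(ℝ, ℝ) := ContinuousMap.id ℝ
  let J : C(ℝ, ℝ) := ⟨fun t => |t|, continuous_abs⟩
  have hT : ∀ N t, truncC0 N I t = t * cutoff N t := fun _ _ => rfl
  have hJ : ∀ N t, truncC0 N J t = |t| * cutoff N t := fun _ _ => rfl
  have hTlim : ∀ t, Tendsto (fun N => truncC0 N I t) atTop (𝓝 t) := fun t =>
    tendsto_const_nhds.congr' (by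
      filter_upwards [eventually_cutoff_eq_one t] with N hN
      rw [hT, hN, mul_one])
  have hTle : ∀ N t, |truncC0 N I t| ≤ |t| := fun N t => by
    rw [hT, abs_mul]; exact mul_le_of_le_one_right (abs_nonneg _) (abs_cutoff_le_one N t)
  -- the truncated first moments are bounded, so `|t|` is integrable for the mixture `ν ∘ₘ μ`
  have hbound : ∃ C : ℝ, ∀ N, ∫ x, ∫ t, truncC0 N J t ∂(ν x) ∂μ ≤ C := by
    obtain ⟨N₀, hN₀⟩ := tail_small hmeas hv hweak ν hgen one_pos
    refine ⟨μ.real Set.univ * N₀ + 1, fun N => ?_⟩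
    have hlim := hgen (truncC0 N J) (fun _ => 1) (integrable_const _)
    simp only [one_mul] at hlim
    refine le_of_tendsto hlim ?_
    filter_upwards [hN₀ N₀ le_rfl] with k hk
    have hi : Integrable ({x | (N₀ : ℝ) < |v k x|}.indicator fun x => |v k x|) μ :=
      (hv k).abs.indicator (hAmeas N₀ k)
    calc ∫ x, truncC0 N J (v k x) ∂μ
        ≤ ∫ x, ((N₀ : ℝ) + {x | (N₀ : ℝ) < |v k x|}.indicator (fun x => |v k x|) x) ∂μ := by
          refine integral_mono (integrable_C0_comp _ (hmeas k))
            ((integrable_const _).add hi) fun x => ?_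
          have h1 : truncC0 N J (v k x) ≤ |v k x| := by
            rw [hJ]; exact mul_le_of_le_one_right (abs_nonneg _) (cutoff_le_one N _)
          refine h1.trans ?_
          by_cases hx : (N₀ : ℝ) < |v k x|
          · rw [Set.indicator_of_mem (by exact hx)]
            exact le_add_of_nonneg_left (Nat.cast_nonneg _)
          · rw [Set.indicator_of_notMem (by exact hx), add_zero]
            exact not_lt.1 hx
      _ ≤ μ.real Set.univ * N₀ + 1 := by
          rw [integral_add (integrable_const _) hi, integral_indicator (hAmeas N₀ k),
            integral_const, smul_eq_mul]
          linarith
  have hint : Integrable (fun t : ℝ => t) (ν ∘ₘ μ) := by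
    obtain ⟨C, hC⟩ := hbound
    have hle : eLpNorm (fun t : ℝ => t) 1 (ν ∘ₘ μ) ≤ ENNReal.ofReal C := by
      refine Lp.eLpNorm_le_of_ae_tendsto (u := atTop) (f := fun N t => truncC0 N I t)
        (Eventually.of_forall fun N => ?_)
        (fun N => (truncC0 N I).continuous.aestronglyMeasurable)
        (Eventually.of_forall hTlim)
      have hi : ∀ φ : ZeroAtInftyContinuousMap ℝ ℝ, Integrable (fun t => φ t) (ν ∘ₘ μ) :=
        fun φ => integrable_C0_comp φ measurable_id
      rw [eLpNorm_one_eq_lintegral_enorm, ← ofReal_integral_norm_eq_lintegral_enorm (hi _)]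
      refine ENNReal.ofReal_le_ofReal ?_
      have hJeq : ∀ t, ‖truncC0 N I t‖ = truncC0 N J t := fun t => by
        rw [hT, hJ, norm_mul, Real.norm_eq_abs, Real.norm_eq_abs,
          abs_of_nonneg (cutoff_nonneg N t)]
      simp only [hJeq]
      have hiJ := hi (truncC0 N J)
      rw [Measure.comp_eq_comp_const_apply] at hiJ ⊢
      rw [ProbabilityTheory.Kernel.integral_comp hiJ, ProbabilityTheory.Kernel.const_apply]
      exact hC N
    exact memLp_one_iff_integrable.1 ⟨continuous_id.aestronglyMeasurable,
      hle.trans_lt ENNReal.ofReal_lt_top⟩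
  have hae : ∀ᵐ x ∂μ, Integrable (fun t : ℝ => t) (ν x) :=
    Measure.ae_integrable_of_integrable_comp hint
  have hlim1 : TendstoInMeasure μ (fun N x => ∫ t, truncC0 N I t ∂(ν x)) atTop
      (fun x => ∫ t, t ∂(ν x)) := by
    refine tendstoInMeasure_of_tendsto_ae
      (fun N => (stronglyMeasurable_integral_C0 ν _).aestronglyMeasurable) ?_
    filter_upwards [hae] with x hx
    exact tendsto_integral_of_dominated_convergence (fun t => |t|)
      (fun N => (truncC0 N I).continuous.aestronglyMeasurable) hx.abs
      (fun N => Eventually.of_forall fun t => hTle N t) (Eventually.of_forall hTlim)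
  -- by duality: test the two weak limits against the sign `s` of the difference
  have hL1 : ∀ ε > 0, ∃ N₀ : ℕ, ∀ N ≥ N₀, ∫ x, |(∫ t, truncC0 N I t ∂(ν x)) - u x| ∂μ ≤ ε := by
    intro ε hε
    obtain ⟨N₀, hN₀⟩ := tail_small hmeas hv hweak ν hgen hε
    refine ⟨N₀, fun N hN => ?_⟩
    -- `u` is only a.e. measurable, while test functions must be measurable
    obtain ⟨u', hu'm, hu'⟩ := hu.1.aemeasurable
    have hbm := (stronglyMeasurable_integral_C0 ν (truncC0 N I)).measurable
    let s : X → ℝ := fun x => if u' x ≤ ∫ t, truncC0 N I t ∂(ν x) then 1 else -1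
    have hsm : Measurable s :=
      Measurable.ite (measurableSet_le hu'm hbm) measurable_const measurable_const
    have hsb : ∀ x, |s x| ≤ 1 := fun x => by dsimp only [s]; split_ifs <;> simp
    have hsi : Integrable s μ :=
      Integrable.of_bound hsm.aestronglyMeasurable 1 (Eventually.of_forall hsb)
    have hmul : ∀ {f : X → ℝ}, Integrable f μ → Integrable (fun x => s x * f x) μ := fun hf => by
      simpa only [mul_comm] using integrable_mul_of_bdd hf hsm.aestronglyMeasurable
        (Eventually.of_forall hsb)
    have hlim := (hgen (truncC0 N I) s hsi).sub (hweak s hsm ⟨1, hsb⟩)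
    have heq : (∫ x, s x * ∫ t, truncC0 N I t ∂(ν x) ∂μ) - ∫ x, u x * s x ∂μ
        = ∫ x, |(∫ t, truncC0 N I t ∂(ν x)) - u x| ∂μ := by
      simp only [mul_comm (u _)]
      rw [← integral_sub (hmul (integrable_integral_C0 ν _)) (hmul hu)]
      refine integral_congr_ae ?_
      filter_upwards [hu'] with x hx
      rw [← mul_sub, hx]
      dsimp only [s]
      split_ifs with h
      · rw [abs_of_nonneg (sub_nonneg.2 h), one_mul]
      · rw [abs_of_neg (sub_neg.2 (not_le.1 h)), neg_one_mul]
    rw [← heq]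
    refine le_of_tendsto hlim ?_
    filter_upwards [hN₀ N hN] with k hk
    refine le_trans ?_ hk
    simp only [mul_comm (v k _)]
    rw [← integral_sub (hmul (integrable_C0_comp _ (hmeas k))) (hmul (hv k)),
      ← integral_indicator (hAmeas N k)]
    refine (le_abs_self _).trans (abs_integral_le_of_abs_le
      ((hv k).abs.indicator (hAmeas N k)) fun x => ?_)
    rw [← mul_sub, abs_mul]
    refine (mul_le_of_le_one_left (abs_nonneg _) (hsb x)).trans ?_
    by_cases hx : (N : ℝ) < |v k x|
    · rw [Set.indicator_of_mem (by exact hx), hT, ← mul_sub_one, abs_mul]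
      refine mul_le_of_le_one_right (abs_nonneg _) (abs_le.2 ⟨?_, ?_⟩)
      · linarith [cutoff_nonneg N (v k x)]
      · linarith [cutoff_le_one N (v k x)]
    · rw [Set.indicator_of_notMem (by exact hx), hT, cutoff_eq_one (not_lt.1 hx), mul_one,
        sub_self, abs_zero]
  have hlim2 : TendstoInMeasure μ (fun N x => ∫ t, truncC0 N I t ∂(ν x)) atTop u := by
    refine tendstoInMeasure_of_tendsto_eLpNorm one_ne_zero
      (fun N => (stronglyMeasurable_integral_C0 ν _).aestronglyMeasurable) hu.1 ?_
    have hr : Tendsto (fun N => ∫ x, |(∫ t, truncC0 N I t ∂(ν x)) - u x| ∂μ) atTop (𝓝 0) := by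
      refine Metric.tendsto_atTop.2 fun ε hε => ?_
      obtain ⟨N₀, hN₀⟩ := hL1 (ε / 2) (half_pos hε)
      refine ⟨N₀, fun N hN => ?_⟩
      rw [Real.dist_0_eq_abs, abs_of_nonneg (integral_nonneg fun x => abs_nonneg _)]
      linarith [hN₀ N hN]
    have hr' := ENNReal.tendsto_ofReal hr
    rw [ENNReal.ofReal_zero] at hr'
    refine hr'.congr fun N => ?_
    rw [eLpNorm_one_eq_lintegral_enorm]
    exact ofReal_integral_norm_eq_lintegral_enorm ((integrable_integral_C0 ν _).sub hu)
  filter_upwards [hae, tendstoInMeasure_ae_unique hlim1 hlim2] with x hx1 hx2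
  exact ⟨hx1, hx2⟩

end Aux

/-- **Barycenter identification for Young measures.**
If the functions `v k` generate the Young measure `ν` (a Markov kernel from `Ω` to `ℝ`)
and `v k ⇀ u` weakly in `L¹(Ω)`, then for a.e. `x ∈ Ω` the barycenter
`ν̄_x = ∫ λ dν_x(λ)` is finite (i.e. the identity is `ν x`-integrable) and equals `u x`. -/
theorem stmt_1 {n : ℕ} (Ω : Set (EuclideanSpace ℝ (Fin n)))
    (hΩopen : IsOpen Ω) (hΩbdd : Bornology.IsBounded Ω)
    (v : ℕ → EuclideanSpace ℝ (Fin n) → ℝ)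
    (hmeas : ∀ k, Measurable (v k))
    (ν : ProbabilityTheory.Kernel (EuclideanSpace ℝ (Fin n)) ℝ)
    (hν : ProbabilityTheory.IsMarkovKernel ν)
    (hgen : ∀ φ : ZeroAtInftyContinuousMap ℝ ℝ, ∀ ψ : EuclideanSpace ℝ (Fin n) → ℝ,
      IntegrableOn ψ Ω volume →
      Tendsto (fun k => ∫ x in Ω, ψ x * φ (v k x)) atTop
        (𝓝 (∫ x in Ω, ψ x * ∫ lam, φ lam ∂(ν x))))
    (u : EuclideanSpace ℝ (Fin n) → ℝ)
    (hu : IntegrableOn u Ω volume)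
    (hvint : ∀ k, IntegrableOn (v k) Ω volume)
    (hweak : ∀ g : EuclideanSpace ℝ (Fin n) → ℝ, Measurable g → (∃ C : ℝ, ∀ x, |g x| ≤ C) →
      Tendsto (fun k => ∫ x in Ω, v k x * g x) atTop (𝓝 (∫ x in Ω, u x * g x))) :
    ∀ᵐ x ∂(volume.restrict Ω),
      Integrable (fun lam : ℝ => lam) (ν x) ∧ (∫ lam, lam ∂(ν x)) = u x := by
  have : IsFiniteMeasure (volume.restrict Ω) :=
    isFiniteMeasure_restrict.2 hΩbdd.measure_lt_top.ne
  exact barycenter_eq_weak_limit hmeas hvint hu hweak ν hgen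
end

section
/- Let S ⊆ ℝ^n be a nonempty closed set, let W : ℝ^n → ℝ be Borel measurable, let m ∈ ℝ and c > 0, and suppose: W(λ) ≥ m for all λ ∈ ℝ^n; W(η) = m for all η ∈ S; and c · dist(λ, S)² ≤ W(λ) − m for all λ ∈ ℝ^n. Let ν be a Borel probability measure on ℝ^n with ∫ W dν < ∞. Then there exist a Borel probability measure ν* on ℝ^n supported in S and a Borel probability measure μ on ℝ^n × ℝ^n whose first marginal is ν and whose second marginal is ν*, such that ∫_{ℝ^n×ℝ^n} ‖λ − η‖² dμ(λ, η) ≤ (1/c) (∫_{ℝ^n} W dν − m). -/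
/-!
The coupling is the law of `(λ, T λ)` under `ν`, where `T` is a Borel measurable nearest-point
map onto `S`: then `‖λ - T λ‖ = dist(λ, S)`, and integrating the coercivity inequality gives the
bound. As `ν` may charge the points with several nearest points in `S`, a measurable selection of
the compact-valued nearest-point correspondence is needed (`exists_measurable_selection`).

The selection runs through a dense sequence `z₀, z₁, …`, replacing the current compact set
successively by its subset of points nearest to `zₖ`. The sets obtained are nested, compact and
nonempty, and their intersection is a single point because two of its points are at the same
distance from every `zₖ`. Each step preserves weak measurability (`{x | F x ∩ C ≠ ∅}` measurable
for closed `C`), and this passes to the limit by compactness.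
-/

open MeasureTheory

/-- The points of `K` nearest to `z`. -/
def nearestIn {E : Type*} [MetricSpace E] (z : E) (K : Set E) : Set E :=
  {y | y ∈ K ∧ edist z y ≤ Metric.infEDist z K}

lemma isClosed_edist_le {E : Type*} [MetricSpace E] (z : E) (r : ENNReal) :
    IsClosed {y | edist z y ≤ r} :=
  isClosed_le (continuous_const.edist continuous_id) continuous_const

lemma isCompact_nearestIn {E : Type*} [MetricSpace E] (z : E) {K : Set E} (hK : IsCompact K) :
    IsCompact (nearestIn z K) :=
  hK.inter_right (isClosed_edist_le z _)

lemma nearestIn_nonempty {E : Type*} [MetricSpace E] (z : E) {K : Set E} (hK : IsCompact K)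
    (hne : K.Nonempty) : (nearestIn z K).Nonempty := by
  obtain ⟨y, hy, h⟩ := hK.exists_infEDist_eq_edist hne z
  exact ⟨y, hy, h.ge⟩

/-- The distance from a fixed point to a weakly measurable compact-valued correspondence is
measurable. The values may be empty, in which case the distance is `⊤`. -/
lemma measurable_infEDist_of_compact {X E : Type*} [MeasurableSpace X] [MetricSpace E]
    (F : X → Set E) (hK : ∀ x, IsCompact (F x))
    (hm : ∀ C, IsClosed C → MeasurableSet {x | (F x ∩ C).Nonempty}) (z : E) :
    Measurable fun x => Metric.infEDist z (F x) := by
  refine measurable_of_Iic fun r => ?_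
  rcases eq_or_ne r ⊤ with rfl | hr
  · simp
  · convert hm _ (isClosed_edist_le z r) using 1
    ext x
    simp only [Set.mem_preimage, Set.mem_Iic, Set.mem_ofPred_eq]
    constructor
    · intro h
      have hne : (F x).Nonempty := by
        by_contra h0
        rw [Set.not_nonempty_iff_eq_empty] at h0
        rw [h0, Metric.infEDist_empty] at h
        exact hr (top_le_iff.mp h)
      obtain ⟨y, hy, hyz⟩ := (hK x).exists_infEDist_eq_edist hne z
      exact ⟨y, hy, hyz.symm.le.trans h⟩
    · rintro ⟨y, hy, hyz⟩
      exact (Metric.infEDist_le_edist_of_mem hy).trans hyz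

/-- Passing to nearest points preserves weak measurability: `nearestIn z (F x)` meets `C` exactly
when `F x ∩ C` is nonempty and no farther from `z` than `F x`. -/
lemma measurableSet_nearestIn {X E : Type*} [MeasurableSpace X] [MetricSpace E]
    (F : X → Set E) (hK : ∀ x, IsCompact (F x))
    (hm : ∀ C, IsClosed C → MeasurableSet {x | (F x ∩ C).Nonempty}) (z : E)
    (C : Set E) (hC : IsClosed C) :
    MeasurableSet {x | (nearestIn z (F x) ∩ C).Nonempty} := by
  have h1 := measurable_infEDist_of_compact F hK hm z
  have h2 := measurable_infEDist_of_compact (fun x => F x ∩ C) (fun x => (hK x).inter_right hC)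
    (fun D hD => by simpa only [Set.inter_assoc] using hm _ (hC.inter hD)) z
  convert (hm C hC).inter (measurableSet_le h2 h1) using 1
  ext x
  constructor
  · rintro ⟨y, ⟨hy, hyz⟩, hyC⟩
    exact ⟨⟨y, hy, hyC⟩, (Metric.infEDist_le_edist_of_mem (s := F x ∩ C) ⟨hy, hyC⟩).trans hyz⟩
  · rintro ⟨hne, hle⟩
    obtain ⟨y, hy, hyz⟩ := ((hK x).inter_right hC).exists_infEDist_eq_edist hne z
    exact ⟨y, ⟨hy.1, hyz.symm.le.trans hle⟩, hy.2⟩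

/-- The set obtained from `K` by passing successively to the points nearest to
`z 0, …, z (k - 1)`. -/
def refineNearest {E : Type*} [MetricSpace E] (z : ℕ → E) (K : Set E) : ℕ → Set E
  | 0 => K
  | k + 1 => nearestIn (z k) (refineNearest z K k)

/-- A weakly measurable correspondence with nonempty compact values in a separable metric space
has a Borel measurable selection. -/
theorem exists_measurable_selection {X E : Type*} [MeasurableSpace X] [MetricSpace E]
    [TopologicalSpace.SeparableSpace E] [Nonempty E] [MeasurableSpace E] [BorelSpace E]
    (F : X → Set E) (hK : ∀ x, IsCompact (F x)) (hne : ∀ x, (F x).Nonempty)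
    (hm : ∀ C, IsClosed C → MeasurableSet {x | (F x ∩ C).Nonempty}) :
    ∃ T : X → E, Measurable T ∧ ∀ x, T x ∈ F x := by
  set z := TopologicalSpace.denseSeq E
  set G : X → ℕ → Set E := fun x => refineNearest z (F x) with hG
  have hGK : ∀ k x, IsCompact (G x k) := by
    intro k x
    induction k with
    | zero => exact hK x
    | succ k ih => exact isCompact_nearestIn _ ih
  have hGne : ∀ k x, (G x k).Nonempty := by
    intro k x
    induction k with
    | zero => exact hne x
    | succ k ih => exact nearestIn_nonempty _ (hGK k x) ih
  have hGm : ∀ k C, IsClosed C → MeasurableSet {x | (G x k ∩ C).Nonempty} := by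
    intro k
    induction k with
    | zero => exact hm
    | succ k ih => exact measurableSet_nearestIn (fun x => G x k) (hGK k) ih _
  have hsub : ∀ x k, G x (k + 1) ⊆ G x k := fun x k y hy => hy.1
  have hex : ∀ x, (⋂ k, G x k).Nonempty := fun x =>
    IsCompact.nonempty_iInter_of_sequence_nonempty_isCompact_isClosed _ (hsub x)
      (fun k => hGne k x) (hGK 0 x) fun k => (hGK k x).isClosed
  have huniq : ∀ x, ∀ y ∈ ⋂ k, G x k, ∀ y' ∈ ⋂ k, G x k, y = y' := by
    intro x y hy y' hy'
    rw [Set.mem_iInter] at hy hy'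
    have hle : ∀ a b : E, (∀ k, a ∈ G x k) → (∀ k, b ∈ G x k) → ∀ k,
        edist (z k) a ≤ edist (z k) b := fun a b ha hb k =>
      (ha (k + 1)).2.trans (Metric.infEDist_le_edist_of_mem (hb k))
    have heq : (fun w => edist w y) = fun w => edist w y' :=
      (TopologicalSpace.denseRange_denseSeq E).equalizer
        (continuous_id.edist continuous_const) (continuous_id.edist continuous_const)
        (funext fun k => (hle y y' hy hy' k).antisymm (hle y' y hy' hy k))
    have := congrFun heq y
    simp only [edist_self] at this
    exact edist_eq_zero.mp this.symm
  choose T hT using hex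
  refine ⟨T, measurable_of_isClosed fun C hC => ?_, fun x => Set.mem_iInter.mp (hT x) 0⟩
  convert MeasurableSet.iInter fun k => hGm k C hC using 1
  ext x
  simp only [Set.mem_preimage, Set.mem_iInter, Set.mem_ofPred_eq]
  constructor
  · exact fun h k => ⟨T x, Set.mem_iInter.mp (hT x) k, h⟩
  · intro h
    obtain ⟨y, hy⟩ := IsCompact.nonempty_iInter_of_sequence_nonempty_isCompact_isClosed
      (fun k => G x k ∩ C) (fun k => Set.inter_subset_inter_left C (hsub x k)) h
      ((hGK 0 x).inter_right hC) fun k => (hGK k x).isClosed.inter hC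
    rw [Set.mem_iInter] at hy
    rw [huniq x _ (hT x) y (Set.mem_iInter.mpr fun k => (hy k).1)]
    exact (hy 0).2

/-- A nonempty closed subset of a proper metric space admits a Borel nearest-point map. -/
theorem exists_measurable_nearest {E : Type*} [MetricSpace E] [ProperSpace E]
    [MeasurableSpace E] [BorelSpace E] (S : Set E) (hne : S.Nonempty) (hS : IsClosed S) :
    ∃ T : E → E, Measurable T ∧ ∀ x, T x ∈ S ∧ dist x (T x) = Metric.infDist x S := by
  have : Nonempty E := ⟨hne.some⟩
  obtain ⟨T, hT, hTF⟩ := exists_measurable_selection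
    (fun x : E => S ∩ Metric.closedBall x (Metric.infDist x S))
    (fun x => (isCompact_closedBall _ _).inter_left hS)
    (fun x => by
      obtain ⟨y, hy, h⟩ := hS.exists_infDist_eq_dist hne x
      exact ⟨y, hy, by rw [Metric.mem_closedBall, dist_comm]; exact h.ge⟩)
    (fun C hC => by
      rcases (S ∩ C).eq_empty_or_nonempty with h0 | h0
      · convert MeasurableSet.empty using 1
        ext x
        simp only [Set.mem_ofPred_eq, Set.mem_empty_iff_false, iff_false]
        rintro ⟨y, ⟨hy, -⟩, hyC⟩
        exact (h0 ▸ (⟨hy, hyC⟩ : y ∈ S ∩ C) : y ∈ (∅ : Set E))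
      · convert measurableSet_le (Metric.continuous_infDist_pt (S ∩ C)).measurable
          (Metric.continuous_infDist_pt S).measurable using 1
        ext x
        constructor
        · rintro ⟨y, ⟨hy, hyx⟩, hyC⟩
          rw [Metric.mem_closedBall, dist_comm] at hyx
          exact (Metric.infDist_le_dist_of_mem (s := S ∩ C) ⟨hy, hyC⟩).trans hyx
        · intro hle
          obtain ⟨y, hy, h⟩ := (hS.inter hC).exists_infDist_eq_dist h0 x
          refine ⟨y, ⟨hy.1, ?_⟩, hy.2⟩
          rw [Metric.mem_closedBall, dist_comm]
          exact h.ge.trans hle)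
  refine ⟨T, hT, fun x => ⟨(hTF x).1, le_antisymm ?_ (Metric.infDist_le_dist_of_mem (hTF x).1)⟩⟩
  rw [dist_comm]
  exact (hTF x).2

/-- **Energy controls the squared Wasserstein-2 distance to a minimizing measure.**
If `W ≥ m`, `W = m` on the nonempty closed set `S`, and `W` satisfies the quadratic
coercivity `c · dist(λ, S)² ≤ W(λ) − m`, then for any probability measure `ν` with
`∫ W dν < ∞` there are a probability measure `ν*` supported in `S` and a coupling `μ`
of `ν` and `ν*` with `∫ ‖λ − η‖² dμ ≤ (1/c)(∫ W dν − m)`. -/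
theorem stmt_6 {n : ℕ} (S : Set (EuclideanSpace ℝ (Fin n)))
    (hSne : S.Nonempty) (hScl : IsClosed S)
    (W : EuclideanSpace ℝ (Fin n) → ℝ) (hWmeas : Measurable W)
    (m c : ℝ) (hc : 0 < c)
    (hWlb : ∀ lam, m ≤ W lam)
    (hWS : ∀ η ∈ S, W η = m)
    (hcoer : ∀ lam, c * (Metric.infDist lam S) ^ 2 ≤ W lam - m)
    (ν : Measure (EuclideanSpace ℝ (Fin n))) (hν : IsProbabilityMeasure ν)
    (hint : Integrable W ν) :
    ∃ νstar : Measure (EuclideanSpace ℝ (Fin n)),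
      IsProbabilityMeasure νstar ∧ νstar Sᶜ = 0 ∧
      ∃ μ : Measure (EuclideanSpace ℝ (Fin n) × EuclideanSpace ℝ (Fin n)),
        IsProbabilityMeasure μ ∧ μ.fst = ν ∧ μ.snd = νstar ∧
        (∫ p : EuclideanSpace ℝ (Fin n) × EuclideanSpace ℝ (Fin n),
            ‖p.1 - p.2‖ ^ 2 ∂μ) ≤ (1 / c) * ((∫ lam, W lam ∂ν) - m) := by
  obtain ⟨T, hT, hTS⟩ := exists_measurable_nearest S hSne hScl
  have hpair : Measurable fun x => (x, T x) := measurable_id.prodMk hT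
  refine ⟨ν.map T, Measure.isProbabilityMeasure_map hT.aemeasurable, ?_,
    ν.map fun x => (x, T x), Measure.isProbabilityMeasure_map hpair.aemeasurable, ?_, ?_, ?_⟩
  · rw [Measure.map_apply hT hScl.measurableSet.compl]
    convert measure_empty (μ := ν)
    ext x
    simp [(hTS x).1]
  · rw [Measure.fst_map_prodMk hT]
    exact Measure.map_id
  · exact Measure.snd_map_prodMk measurable_id
  · rw [integral_map hpair.aemeasurable (by fun_prop)]
    have hm : (∫ lam, W lam ∂ν) - m = ∫ lam, (W lam - m) ∂ν := by
      rw [integral_sub hint (integrable_const m)]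
      simp
    rw [hm, ← integral_const_mul]
    refine integral_mono_of_nonneg (Filter.Eventually.of_forall fun x => by positivity)
      ((hint.sub (integrable_const m)).const_mul _) (Filter.Eventually.of_forall fun x => ?_)
    simp only
    rw [← dist_eq_norm, (hTS x).2, one_div, ← div_eq_inv_mul, le_div_iff₀ hc, mul_comm]
    exact hcoer x
end

section
/- Consider the 1D Bolza functional E(u) = ∫_0^1 ((u′(x))² − 1)² + u(x)² dx over Lipschitz functions u : [0,1] → ℝ with u(0) = 0 and u(1) = 0, where u′ denotes the a.e. derivative. Then E(u) > 0 for every admissible u; in particular the infimum value 0 is not attained by any Lipschitz function satisfying the boundary conditions. -/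
/-!
The integrand is nonnegative and integrable (`u` is continuous and `|u'| ≤ K` on the open interval),
so a nonpositive energy forces it to vanish almost everywhere. Then `u = 0` a.e., hence `u = 0` on all
of `(0, 1)` by continuity, hence `u' = 0` there, and the integrand equals `1` on `(0, 1)`: contradiction.
-/

open MeasureTheory

/-- Without integrability the Bochner integral would be the junk value `0`. The derivative is
measurable for an arbitrary function, and bounded by the Lipschitz constant on `(0, 1)`. -/
lemma bolza_integrableOn (u : ℝ → ℝ) (K : NNReal) (hK : LipschitzOnWith K u (Set.Icc 0 1)) :
    IntegrableOn (fun x => (deriv u x ^ 2 - 1) ^ 2 + u x ^ 2) (Set.Ioo (0 : ℝ) 1) := by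
  have hu2 : IntegrableOn (fun x => u x ^ 2) (Set.Ioo (0 : ℝ) 1) :=
    ((hK.continuousOn.pow 2).integrableOn_Icc).mono_set Set.Ioo_subset_Icc_self
  refine Integrable.add ?_ hu2
  refine Measure.integrableOn_of_bounded (M := ((K : ℝ) ^ 2 + 1) ^ 2) (by simp) ?_ ?_
  · exact ((((measurable_deriv u).pow_const 2).sub_const 1).pow_const 2).aestronglyMeasurable
  · refine (ae_restrict_mem measurableSet_Ioo).mono fun x hx => ?_
    have hd : |deriv u x| ≤ K :=
      norm_deriv_le_of_lipschitzOn (Icc_mem_nhds hx.1 hx.2) hK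
    have hsq : deriv u x ^ 2 ≤ (K : ℝ) ^ 2 := sq_le_sq' (abs_le.1 hd).1 (abs_le.1 hd).2
    rw [Real.norm_of_nonneg (sq_nonneg _)]
    apply sq_le_sq' <;> nlinarith [sq_nonneg (deriv u x)]

/-- **The 1D Bolza infimum is not attained.**
Every Lipschitz `u : [0,1] → ℝ` with `u 0 = u 1 = 0` has strictly positive Bolza
energy `E(u) = ∫₀¹ ((u')² − 1)² + u² dx > 0`, so the infimum value `0` is not
attained. -/
theorem stmt_9 (u : ℝ → ℝ) (hu : ∃ K : NNReal, LipschitzOnWith K u (Set.Icc 0 1))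
    (h0 : u 0 = 0) (h1 : u 1 = 0) :
    0 < ∫ x in Set.Icc (0 : ℝ) 1, ((deriv u x ^ 2 - 1) ^ 2 + u x ^ 2) := by
  obtain ⟨K, hK⟩ := hu
  -- The values of `u` outside `[0, 1]` influence `deriv u` only at the endpoints, a null set.
  rw [integral_Icc_eq_integral_Ioo]
  have hnn : ∀ x, 0 ≤ (deriv u x ^ 2 - 1) ^ 2 + u x ^ 2 := fun x => by positivity
  refine lt_of_le_of_ne (integral_nonneg hnn) fun h => ?_
  have hae := (integral_eq_zero_iff_of_nonneg hnn (bolza_integrableOn u K hK)).1 h.symm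
  have hu0 : u =ᵐ[volume.restrict (Set.Ioo 0 1)] fun _ => (0 : ℝ) := by
    filter_upwards [hae] with x hx
    have hx' : (deriv u x ^ 2 - 1) ^ 2 + u x ^ 2 = 0 := hx
    exact pow_eq_zero_iff two_ne_zero |>.1
      (by nlinarith [sq_nonneg (deriv u x ^ 2 - 1), sq_nonneg (u x)])
  have hEq : Set.EqOn u (fun _ => 0) (Set.Ioo 0 1) :=
    Measure.eqOn_open_of_ae_eq hu0 isOpen_Ioo
      (hK.continuousOn.mono Set.Ioo_subset_Icc_self) continuousOn_const
  have hF : ∀ᵐ x ∂volume.restrict (Set.Ioo (0 : ℝ) 1), False := by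
    filter_upwards [hae, ae_restrict_mem measurableSet_Ioo] with x hx hm
    have hd : deriv u x = 0 := by
      rw [(hEq.eventuallyEq_of_mem (Ioo_mem_nhds hm.1 hm.2)).deriv_eq, deriv_const]
    have hx' : (deriv u x ^ 2 - 1) ^ 2 + u x ^ 2 = 0 := hx
    rw [hd, hEq hm] at hx'
    norm_num at hx'
  rw [Filter.eventually_false_iff_eq_bot, ae_eq_bot, Measure.restrict_eq_zero] at hF
  simp at hF
end

section
/- Consider the functional E(u) = ∫_{[0,1]²} ((∂_x u)² − 1)² + (∂_y u)² dx dy over Lipschitz functions u : [0,1]² → ℝ vanishing on the boundary of the unit square (u(0,y) = u(1,y) = u(x,0) = u(x,1) = 0), where ∂_x u and ∂_y u denote the partial derivatives, which exist almost everywhere. Then the infimum of E over this class equals 0; that is, E(u) ≥ 0 for every admissible u, and for every ε > 0 there exists an admissible Lipschitz u with E(u) < ε. -/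
open MeasureTheory

/-!
Nonnegativity is immediate, the integrand being a sum of squares.

For the infimum, let `saw n` be the distance to the grid `(1/n) ℤ`: a sawtooth of height `1/(2n)`
whose slope is `±1` off a countable set. The competitor is
`u (x, y) = min (saw n x) (min y (1 - y))`, which is `1`-Lipschitz and vanishes on the boundary of
the square. For `1/(2n) < y < 1 - 1/(2n)` it coincides with `saw n x`, so the energy density
vanishes there for almost every `x`. On the two remaining strips, of total area `1/n`, both partial
derivatives are bounded by `1` and the density is at most `2`. Hence the energy is at most `2/n`.
-/

/-- The sawtooth of period `1/n`: the distance from `x` to the grid `(1/n) ℤ`. -/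
noncomputable def saw (n : ℕ) (x : ℝ) : ℝ := |n * x - round (n * x)| / n

lemma saw_nonneg (n : ℕ) (x : ℝ) : 0 ≤ saw n x := by unfold saw; positivity

lemma saw_le (n : ℕ) (x : ℝ) : saw n x ≤ 1 / (2 * n) := by
  have h := abs_sub_round ((n : ℝ) * x)
  calc saw n x ≤ (1 / 2) / n := by unfold saw; gcongr
    _ = 1 / (2 * n) := by rw [div_div]

lemma saw_lipschitz {n : ℕ} (hn : 0 < n) : LipschitzWith 1 (saw n) := by
  have hn' : (0 : ℝ) < n := by exact_mod_cast hn
  refine LipschitzWith.of_le_add fun x y => ?_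
  -- The integer nearest to `n * y` is a competitor for the distance from `n * x` to `ℤ`.
  have h1 := round_le ((n : ℝ) * x) (round ((n : ℝ) * y))
  have h2 := abs_sub_le ((n : ℝ) * x) (n * y) (round ((n : ℝ) * y))
  have h3 : |(n : ℝ) * x - n * y| = n * dist x y := by
    rw [← mul_sub, abs_mul, abs_of_pos hn', Real.dist_eq]
  unfold saw
  rw [div_le_iff₀ hn', add_mul, div_mul_cancel₀ _ hn'.ne']
  linarith

/-- Away from the integers and half-integers in the variable `n * x`, the nearest integer is locally
constant, and the sawtooth is locally an affine function of slope `±1`. -/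
lemma saw_deriv_sq {n : ℕ} (hn : 0 < n) {x : ℝ} (h1 : ∀ k : ℤ, x ≠ k / n)
    (h2 : ∀ k : ℤ, x ≠ (k - 1 / 2) / n) : deriv (saw n) x ^ 2 = 1 := by
  have hn' : (0 : ℝ) < n := by exact_mod_cast hn
  set c : ℤ := round ((n : ℝ) * x) with hc
  have hfl : ⌊(n : ℝ) * x + 1 / 2⌋ = c := by rw [hc, round_eq]
  obtain ⟨ha, hb⟩ := Int.floor_eq_iff.1 hfl
  have ha' : (c : ℝ) < n * x + 1 / 2 := by
    refine lt_of_le_of_ne ha fun h => h2 c ?_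
    field_simp; linarith
  have hev : saw n =ᶠ[nhds x] fun t => |n * t - c| / n := by
    have e1 : ∀ᶠ t in nhds x, (c : ℝ) < n * t + 1 / 2 :=
      (by fun_prop : ContinuousAt (fun t : ℝ => (n : ℝ) * t + 1 / 2) x).eventually
        (lt_mem_nhds ha')
    have e2 : ∀ᶠ t in nhds x, (n : ℝ) * t + 1 / 2 < c + 1 :=
      (by fun_prop : ContinuousAt (fun t : ℝ => (n : ℝ) * t + 1 / 2) x).eventually
        (gt_mem_nhds hb)
    filter_upwards [e1, e2] with t ht1 ht2
    have : round ((n : ℝ) * t) = c := by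
      rw [round_eq]; exact Int.floor_eq_iff.2 ⟨ht1.le, ht2⟩
    simp only [saw, this]
  have hne : (n : ℝ) * x - c ≠ 0 := by
    intro h
    apply h1 c
    field_simp; linarith
  have hlin : HasDerivAt (fun t : ℝ => (n : ℝ) * t - c) n x := by
    simpa using ((hasDerivAt_id x).const_mul (n : ℝ)).sub_const (c : ℝ)
  rw [hev.deriv_eq]
  rcases lt_or_gt_of_ne hne with h | h
  · have hder : HasDerivAt (fun t : ℝ => |n * t - c| / n) (-1 * n / n) x := by
      have hcomp := (hasDerivAt_abs_neg h).comp x hlin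
      exact hcomp.div_const (n : ℝ)
    rw [hder.deriv]
    field_simp
  · have hder : HasDerivAt (fun t : ℝ => |n * t - c| / n) (1 * n / n) x := by
      have hcomp := (hasDerivAt_abs_pos h).comp x hlin
      exact hcomp.div_const (n : ℝ)
    rw [hder.deriv]
    field_simp

lemma saw_deriv_sq_ae {n : ℕ} (hn : 0 < n) : ∀ᵐ x : ℝ, deriv (saw n) x ^ 2 = 1 := by
  have c1 : (Set.range fun k : ℤ => (k : ℝ) / n).Countable := Set.countable_range _
  have c2 : (Set.range fun k : ℤ => ((k : ℝ) - 1 / 2) / n).Countable := Set.countable_range _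
  filter_upwards [c1.ae_notMem volume, c2.ae_notMem volume] with x h1 h2
  exact saw_deriv_sq hn (fun k hk => h1 ⟨k, hk.symm⟩) (fun k hk => h2 ⟨k, hk.symm⟩)

/-- The competitor: the sawtooth in `x`, cut off by the distance to the sides `y = 0`, `y = 1`. -/
noncomputable def cutSaw (n : ℕ) (p : ℝ × ℝ) : ℝ := min (saw n p.1) (min p.2 (1 - p.2))

lemma cutSaw_lipschitz {n : ℕ} (hn : 0 < n) : LipschitzWith 1 (cutSaw n) := by
  have h1 : LipschitzWith 1 fun p : ℝ × ℝ => saw n p.1 := by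
    simpa [Function.comp_def] using (saw_lipschitz hn).comp LipschitzWith.prod_fst
  have h2 : LipschitzWith 1 fun p : ℝ × ℝ => p.2 := LipschitzWith.prod_snd
  have h3 : LipschitzWith 1 fun p : ℝ × ℝ => 1 - p.2 := by
    simpa using (LipschitzWith.const (1 : ℝ)).sub h2
  simpa [← cutSaw.eq_1] using h1.min (h2.min h3)

/-- The energy density of `u`. -/
noncomputable def density (u : ℝ × ℝ → ℝ) (p : ℝ × ℝ) : ℝ :=
  (deriv (fun t => u (t, p.2)) p.1 ^ 2 - 1) ^ 2 + deriv (fun t => u (p.1, t)) p.2 ^ 2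

lemma density_nonneg (u : ℝ × ℝ → ℝ) (p : ℝ × ℝ) : 0 ≤ density u p := by
  unfold density; positivity

lemma density_le_two {u : ℝ × ℝ → ℝ} (hu : LipschitzWith 1 u) (p : ℝ × ℝ) :
    density u p ≤ 2 := by
  have hx : LipschitzWith 1 fun t => u (t, p.2) := by
    simpa [Function.comp_def] using hu.comp (LipschitzWith.prodMk_right p.2)
  have hy : LipschitzWith 1 fun t => u (p.1, t) := by
    simpa [Function.comp_def] using hu.comp (LipschitzWith.prodMk_left p.1)
  have dx := norm_deriv_le_of_lipschitz (x₀ := p.1) hx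
  have dy := norm_deriv_le_of_lipschitz (x₀ := p.2) hy
  rw [Real.norm_eq_abs, NNReal.coe_one, ← sq_le_one_iff_abs_le_one] at dx dy
  unfold density
  nlinarith [sq_nonneg (deriv (fun t => u (t, p.2)) p.1)]

lemma density_cutSaw_eq_zero {n : ℕ} {p : ℝ × ℝ} (hp : deriv (saw n) p.1 ^ 2 = 1)
    (h1 : 1 / (2 * n) < p.2) (h2 : p.2 < 1 - 1 / (2 * n)) : density (cutSaw n) p = 0 := by
  have key : ∀ x y : ℝ, 1 / (2 * n) < y → y < 1 - 1 / (2 * n) → cutSaw n (x, y) = saw n x := by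
    intro x y hy1 hy2
    have := saw_le n x
    exact min_eq_left (le_min (by linarith) (by linarith))
  have ex : (fun t => cutSaw n (t, p.2)) = saw n := funext fun t => key t _ h1 h2
  have ey : (fun t => cutSaw n (p.1, t)) =ᶠ[nhds p.2] fun _ => saw n p.1 := by
    filter_upwards [lt_mem_nhds h1, gt_mem_nhds h2] with t ht1 ht2 using key _ _ ht1 ht2
  unfold density
  rw [ex, ey.deriv_eq, hp]
  simp

lemma energy_cutSaw_le {n : ℕ} (hn : 0 < n) :
    ∫ p in Set.Icc (0 : ℝ) 1 ×ˢ Set.Icc (0 : ℝ) 1, density (cutSaw n) p ≤ 2 / n := by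
  have hn' : (0 : ℝ) < n := by exact_mod_cast hn
  set d : ℝ := 1 / (2 * n) with hd
  have hd0 : 0 < d := by positivity
  set S : Set (ℝ × ℝ) := Set.Icc (0 : ℝ) 1 ×ˢ Set.Icc (0 : ℝ) 1 with hS
  set T : Set (ℝ × ℝ) := Set.Icc (0 : ℝ) 1 ×ˢ (Set.Icc 0 d ∪ Set.Icc (1 - d) 1) with hT
  have hTm : MeasurableSet T :=
    measurableSet_Icc.prod (measurableSet_Icc.union measurableSet_Icc)
  have hSm : MeasurableSet S := measurableSet_Icc.prod measurableSet_Icc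
  have hTvol : volume T ≤ ENNReal.ofReal (2 * d) := by
    rw [hT, Measure.volume_eq_prod, Measure.prod_prod, Real.volume_Icc]
    calc _ ≤ ENNReal.ofReal (1 - 0) *
          (volume (Set.Icc (0 : ℝ) d) + volume (Set.Icc (1 - d) 1)) := by
            gcongr; exact measure_union_le _ _
      _ = ENNReal.ofReal (2 * d) := by
            rw [Real.volume_Icc, Real.volume_Icc, ← ENNReal.ofReal_add (by linarith) (by linarith),
              sub_zero, ENNReal.ofReal_one, one_mul]
            congr 1; ring
  have hTfin : volume T ≠ ⊤ := (hTvol.trans_lt ENNReal.ofReal_lt_top).ne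
  have hint : Integrable (T.indicator fun _ => (2 : ℝ)) (volume : Measure (ℝ × ℝ)) :=
    (integrable_indicator_iff hTm).2 (integrableOn_const hTfin)
  have hae : ∀ᵐ p : ℝ × ℝ, deriv (saw n) p.1 ^ 2 = 1 :=
    (Measure.quasiMeasurePreserving_fst (μ := (volume : Measure ℝ))
      (ν := (volume : Measure ℝ))).ae (saw_deriv_sq_ae hn)
  calc ∫ p in S, density (cutSaw n) p ≤ ∫ p in S, T.indicator (fun _ => (2 : ℝ)) p := by
        refine integral_mono_of_nonneg (ae_of_all _ fun p => density_nonneg _ p)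
          hint.integrableOn ?_
        filter_upwards [ae_restrict_of_ae hae, ae_restrict_mem hSm] with p hp hpS
        by_cases hpT : p ∈ T
        · rw [Set.indicator_of_mem hpT]
          exact density_le_two (cutSaw_lipschitz hn) p
        · rw [Set.indicator_of_notMem hpT]
          refine (density_cutSaw_eq_zero hp ?_ ?_).le
          · by_contra! h
            exact hpT ⟨hpS.1, Or.inl ⟨hpS.2.1, h⟩⟩
          · by_contra! h
            exact hpT ⟨hpS.1, Or.inr ⟨h, hpS.2.2⟩⟩
    _ ≤ ∫ p, T.indicator (fun _ => (2 : ℝ)) p :=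
        setIntegral_le_integral hint
          (ae_of_all _ fun p => Set.indicator_nonneg (fun _ _ => by norm_num) p)
    _ = volume.real T * 2 := by
        rw [integral_indicator hTm, setIntegral_const, smul_eq_mul]
    _ ≤ (2 * d) * 2 := by
        gcongr
        exact ENNReal.toReal_le_of_le_ofReal (by positivity) hTvol
    _ = 2 / n := by rw [hd]; field_simp

/-- **The quasi one-dimensional two-well problem has infimum 0.**
Over Lipschitz functions `u : [0,1]² → ℝ` vanishing on the boundary of the unit
square, the energy `E(u) = ∫_{[0,1]²} ((∂ₓu)² − 1)² + (∂_y u)² dx dy` (with a.e.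
partial derivatives) is nonnegative, and some admissible `u` has `E(u) < ε` for every
`ε > 0`. -/
theorem stmt_11 :
    (∀ u : ℝ × ℝ → ℝ,
      (∃ K : NNReal, LipschitzOnWith K u (Set.Icc 0 1 ×ˢ Set.Icc 0 1)) →
      (∀ y ∈ Set.Icc (0 : ℝ) 1, u (0, y) = 0 ∧ u (1, y) = 0) →
      (∀ x ∈ Set.Icc (0 : ℝ) 1, u (x, 0) = 0 ∧ u (x, 1) = 0) →
      0 ≤ ∫ p in Set.Icc (0 : ℝ) 1 ×ˢ Set.Icc (0 : ℝ) 1,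
        ((deriv (fun t => u (t, p.2)) p.1 ^ 2 - 1) ^ 2 +
          deriv (fun t => u (p.1, t)) p.2 ^ 2)) ∧
    (∀ ε : ℝ, 0 < ε →
      ∃ u : ℝ × ℝ → ℝ,
        (∃ K : NNReal, LipschitzOnWith K u (Set.Icc 0 1 ×ˢ Set.Icc 0 1)) ∧
        (∀ y ∈ Set.Icc (0 : ℝ) 1, u (0, y) = 0 ∧ u (1, y) = 0) ∧
        (∀ x ∈ Set.Icc (0 : ℝ) 1, u (x, 0) = 0 ∧ u (x, 1) = 0) ∧
        (∫ p in Set.Icc (0 : ℝ) 1 ×ˢ Set.Icc (0 : ℝ) 1,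
          ((deriv (fun t => u (t, p.2)) p.1 ^ 2 - 1) ^ 2 +
            deriv (fun t => u (p.1, t)) p.2 ^ 2)) < ε) := by
  refine ⟨fun u _ _ _ => integral_nonneg fun p => density_nonneg u p, fun ε hε => ?_⟩
  obtain ⟨m, hm⟩ := exists_nat_gt (2 / ε)
  have hm0 : (0 : ℝ) < m := lt_trans (by positivity) hm
  have hmpos : 0 < m := by exact_mod_cast hm0
  refine ⟨cutSaw m, ⟨1, (cutSaw_lipschitz hmpos).lipschitzOnWith⟩, fun y hy => ?_,
    fun x _ => ?_, ?_⟩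
  · have h0 : saw m 0 = 0 := by simp [saw]
    have h1 : saw m 1 = 0 := by simp [saw]
    have hy' : 0 ≤ min y (1 - y) := le_min hy.1 (by linarith [hy.2])
    simp only [cutSaw, h0, h1]
    exact ⟨min_eq_left hy', min_eq_left hy'⟩
  · have := saw_nonneg m x
    constructor <;> simp [cutSaw, this]
  · refine (energy_cutSaw_le hmpos).trans_lt ?_
    rw [div_lt_iff₀ hε] at hm
    rw [div_lt_iff₀ hm0]
    linarith
end
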